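/- arXiv:1203.5859 — 2 statements merged into one kernel-verified Lean document; each statement's English description precedes it below -/
import Mathlib

section
/- For a real sequence (s_k)_{k≥0} and a fixed k ∈ ℕ, there exists a (nonnegative Borel) measure σ on ℝ whose support consists of exactly k+1 points such that s_n = ∫_ℝ u^n dσ(u) for all n ≥ 0, if and only if D_0 > 0, D_1 > 0, …, D_k > 0 and D_{k+1} = D_{k+2} = ⋯ = 0, where D_m denotes the determinant of the (m+1)×(m+1) Hankel matrix (s_{i+j})_{0≤i,j≤m}. -/
open MeasureTheory

/-- The determinant `D_m` of the `(m+1) × (m+1)` Hankel matrix `(s (i+j))_{0 ≤ i,j ≤ m}`. -/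
noncomputable def hankelDet (s : ℕ → ℝ) (m : ℕ) : ℝ :=
  (Matrix.of fun i j : Fin (m + 1) => s (i.1 + j.1)).det

open Polynomial in
/-- The moment functional. -/
noncomputable def momL (s : ℕ → ℝ) : ℝ[X] →ₗ[ℝ] ℝ :=
  Polynomial.lsum (fun i => s i • LinearMap.id)

open Polynomial

lemma momL_mon (s : ℕ → ℝ) (n : ℕ) (a : ℝ) : momL s (monomial n a) = a * s n := by
  simp [momL, Polynomial.lsum, Polynomial.sum_monomial_index, mul_comm]

lemma momL_X_pow (s : ℕ → ℝ) (n : ℕ) : momL s (X ^ n) = s n := by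
  rw [← monomial_one_right_eq_X_pow, momL_mon, one_mul]

lemma hank_mulVec (s : ℕ → ℝ) (m : ℕ) (c : Fin (m + 1) → ℝ) (i : Fin (m + 1)) :
    ((Matrix.of fun i j : Fin (m + 1) => s (i.1 + j.1)).mulVec c) i
      = momL s (ofFn (m + 1) c * X ^ i.1) := by
  rw [ofFn_eq_sum_monomial, Finset.sum_mul, map_sum]
  simp only [monomial_mul_X_pow, momL_mon, Matrix.mulVec, dotProduct, Matrix.of_apply]
  exact Finset.sum_congr rfl fun j _ => by rw [mul_comm, add_comm]

lemma hank_quad (s : ℕ → ℝ) (m : ℕ) (c : Fin (m + 1) → ℝ) :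
    c ⬝ᵥ ((Matrix.of fun i j : Fin (m + 1) => s (i.1 + j.1)).mulVec c)
      = momL s (ofFn (m + 1) c * ofFn (m + 1) c) := by
  have e : momL s (ofFn (m + 1) c * ofFn (m + 1) c)
      = momL s ((∑ i : Fin (m + 1), monomial i.1 (c i)) * ofFn (m + 1) c) := by
    rw [← ofFn_eq_sum_monomial]
  rw [e, Finset.sum_mul, map_sum]
  unfold dotProduct
  refine Finset.sum_congr rfl fun i _ => ?_
  rw [hank_mulVec, ← smul_eq_mul, ← map_smul, ← C_mul_X_pow_eq_monomial, smul_eq_C_mul]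
  congr 1; ring

lemma exists_ofFn {m : ℕ} {f : ℝ[X]} (hf : f.natDegree ≤ m) :
    ∃ c, ofFn (m + 1) c = f :=
  ⟨toFn (m + 1) f, ofFn_comp_toFn_eq_id_of_natDegree_lt (by omega)⟩

lemma ofFn_deg (m : ℕ) (c : Fin (m + 1) → ℝ) : (ofFn (m + 1) c).natDegree ≤ m :=
  Nat.lt_succ_iff.1 (ofFn_natDegree_lt (by omega) c)

lemma ofFn_ne {m : ℕ} {c : Fin (m + 1) → ℝ} : ofFn (m + 1) c ≠ 0 ↔ c ≠ 0 := by
  rw [not_iff_not]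
  exact ⟨fun h => injective_ofFn (m + 1) (by rw [h, ofFn_zero]), fun h => by rw [h, ofFn_zero]⟩

lemma hank_symm (s : ℕ → ℝ) (m : ℕ) :
    (Matrix.of fun i j : Fin (m + 1) => s (i.1 + j.1)).IsHermitian := by
  ext i j; simp [add_comm]

lemma hank_posDef (s : ℕ → ℝ) (m : ℕ) :
    (Matrix.of fun i j : Fin (m + 1) => s (i.1 + j.1)).PosDef ↔
      ∀ f : ℝ[X], f ≠ 0 → f.natDegree ≤ m → 0 < momL s (f * f) := by
  constructor
  · intro h f hf hm
    obtain ⟨c, rfl⟩ := exists_ofFn hm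
    rw [← hank_quad]
    simpa using h.dotProduct_mulVec_pos (ofFn_ne.1 hf)
  · intro h
    refine Matrix.PosDef.of_dotProduct_mulVec_pos (hank_symm s m) fun c hc => ?_
    simpa [hank_quad] using h _ (ofFn_ne.2 hc) (ofFn_deg m c)

lemma hank_zero (s : ℕ → ℝ) (m : ℕ) :
    hankelDet s m = 0 ↔
      ∃ f : ℝ[X], f ≠ 0 ∧ f.natDegree ≤ m ∧ ∀ i ≤ m, momL s (f * X ^ i) = 0 := by
  rw [hankelDet, ← Matrix.exists_mulVec_eq_zero_iff]
  constructor
  · rintro ⟨c, hc, h⟩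
    refine ⟨_, ofFn_ne.2 hc, ofFn_deg m c, fun i hi => ?_⟩
    have := congrFun h ⟨i, by omega⟩
    rw [hank_mulVec] at this
    exact this
  · rintro ⟨f, hf, hm, h⟩
    obtain ⟨c, rfl⟩ := exists_ofFn hm
    refine ⟨c, ofFn_ne.1 hf, ?_⟩
    ext i
    rw [hank_mulVec]
    exact h i (by omega)

lemma sylv_step {n : Type*} [Fintype n] [DecidableEq n] (M : Matrix (n ⊕ Fin 1) (n ⊕ Fin 1) ℝ)
    (hM : M.IsHermitian) (h1 : M.toBlocks₁₁.PosDef) (h2 : 0 < M.det) : M.PosDef := by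
  have e : M = Matrix.fromBlocks M.toBlocks₁₁ M.toBlocks₁₂ (M.toBlocks₁₂).conjTranspose
      M.toBlocks₂₂ := by
    conv_lhs => rw [← Matrix.fromBlocks_toBlocks M]
    congr 1
    ext i j
    have := congrFun (congrFun hM (Sum.inr i)) (Sum.inl j)
    simpa [Matrix.toBlocks₂₁, Matrix.toBlocks₁₂] using this.symm
  have := h1.isUnit.invertible
  have hdet := h2
  rw [e, Matrix.det_fromBlocks₁₁] at hdet
  have hp := (pos_iff_pos_of_mul_pos hdet).1 h1.det_pos
  rw [Matrix.invOf_eq_nonsing_inv, Matrix.det_fin_one] at hp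
  have hs : M.PosSemidef := by
    rw [e, Matrix.PosDef.fromBlocks₁₁ _ _ h1]
    refine Matrix.PosSemidef.of_dotProduct_mulVec_nonneg ?_ ?_
    · ext i j
      fin_cases i; fin_cases j; simp
    · intro x
      simp only [dotProduct, Matrix.mulVec, Finset.univ_unique, Finset.sum_singleton, Pi.star_apply, star_trivial, Fin.default_eq_zero]
      have := mul_nonneg hp.le (mul_self_nonneg (x 0))
      linarith
  exact hs.posDef_iff_det_ne_zero.2 h2.ne'

lemma hank_sylvester (s : ℕ → ℝ) (k : ℕ) (h : ∀ m ≤ k, 0 < hankelDet s m) :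
    (Matrix.of fun i j : Fin (k + 1) => s (i.1 + j.1)).PosDef := by
  induction k with
  | zero =>
    rw [hank_posDef]
    intro f hf hd
    have h0 := h 0 le_rfl
    simp [hankelDet] at h0
    rw [eq_C_of_natDegree_le_zero hd] at hf ⊢
    rw [← C_mul, ← monomial_zero_left, momL_mon]
    have : f.coeff 0 ≠ 0 := by simpa using hf
    exact mul_pos (mul_self_pos.2 this) h0
  | succ k ih =>
    have ih := ih fun m hm => h m (by omega)
    have hk := h (k + 1) le_rfl
    set H := (Matrix.of fun i j : Fin (k + 1 + 1) => s (i.1 + j.1)) with hH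
    let e : Fin (k + 1) ⊕ Fin 1 ≃ Fin (k + 1 + 1) := finSumFinEquiv
    have key : (H.submatrix e e).PosDef := by
      apply sylv_step
      · exact (hank_symm s (k + 1)).submatrix e
      · exact ih
      · rw [Matrix.det_submatrix_equiv_self]; exact hk
    have := key.submatrix e.symm.injective
    simpa using this

lemma momL_mul_eq_zero {s : ℕ → ℝ} {f g : ℝ[X]} {n : ℕ} (hg : g.natDegree ≤ n)
    (h : ∀ i ≤ n, momL s (f * X ^ i) = 0) : momL s (f * g) = 0 := by
  rw [g.as_sum_range' (n + 1) (by omega), Finset.mul_sum, map_sum]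
  refine Finset.sum_eq_zero fun i hi => ?_
  have e : f * monomial i (g.coeff i) = g.coeff i • (f * X ^ i) := by
    rw [← C_mul_X_pow_eq_monomial, smul_eq_C_mul]; ring
  rw [e, map_smul, h i (by simpa [Nat.lt_succ_iff] using hi), smul_zero]

lemma exists_ann {s : ℕ → ℝ} {k : ℕ}
    (pd : ∀ f : ℝ[X], f ≠ 0 → f.natDegree ≤ k → 0 < momL s (f * f))
    (hz : ∀ m > k, hankelDet s m = 0) :
    ∃ p : ℝ[X], p.natDegree = k + 1 ∧ ∀ f, momL s (p * f) = 0 := by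
  have nd : ∀ f : ℝ[X], f.natDegree ≤ k → (∀ i ≤ k, momL s (f * X ^ i) = 0) → f = 0 := by
    intro f hf h
    by_contra h0
    exact (pd f h0 hf).ne' (momL_mul_eq_zero hf h)
  obtain ⟨p, hp0, hpd, hp⟩ := (hank_zero s (k + 1)).1 (hz (k + 1) (by omega))
  have hdeg : p.natDegree = k + 1 := by
    by_contra hne
    exact hp0 (nd p (by omega) fun i hi => hp i (by omega))
  have key : ∀ N, momL s (p * X ^ N) = 0 := by
    intro N
    induction N using Nat.strong_induction_on with
    | _ N ih =>
    by_cases hN : N ≤ k + 1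
    · exact hp N hN
    push Not at hN
    obtain ⟨q, hq0, hqd, hq⟩ := (hank_zero s N).1 (hz N (by omega))
    set a := q / p with ha
    set r := q % p with hr
    have hqe : p * a + r = q := EuclideanDomain.div_add_mod q p
    have hrd : r.natDegree ≤ k := by
      have := natDegree_mod_lt q (q := p) (by omega)
      rw [← hr] at this
      omega
    have had : a.natDegree + (k + 1) ≤ N := by
      by_cases ha0 : a = 0
      · simp [ha0]; omega
      have h1 : (p * a).natDegree ≤ N := by
        rw [eq_sub_of_add_eq hqe]
        exact (natDegree_sub_le _ _).trans (max_le hqd (by omega))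
      rw [natDegree_mul hp0 ha0] at h1
      omega
    have hr0 : r = 0 := by
      apply nd r hrd
      intro i hi
      have h1 : momL s (p * (a * X ^ i)) = 0 := by
        apply momL_mul_eq_zero (n := N - 1)
        · refine natDegree_mul_le.trans ?_
          rw [natDegree_X_pow]; omega
        · intro j hj; exact ih j (by omega)
      have h2 := hq i (by omega)
      rw [← hqe, add_mul, map_add, mul_assoc, h1, zero_add] at h2
      exact h2
    rw [hr0, add_zero] at hqe
    have ha0 : a ≠ 0 := by
      rintro h; rw [h, mul_zero] at hqe; exact hq0 hqe.symm
    have h3 := hq (N - a.natDegree) (by omega)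
    have e : q * X ^ (N - a.natDegree) = p * (a.eraseLead * X ^ (N - a.natDegree))
        + a.leadingCoeff • (p * X ^ N) := by
      have hx : (X : ℝ[X]) ^ N = X ^ a.natDegree * X ^ (N - a.natDegree) := by
        rw [← pow_add]; congr 1; omega
      rw [hx, smul_eq_C_mul, ← hqe]
      linear_combination (-p * X ^ (N - a.natDegree)) * eraseLead_add_C_mul_X_pow a
    rw [e, map_add, map_smul] at h3
    have h4 : momL s (p * (a.eraseLead * X ^ (N - a.natDegree))) = 0 := by
      by_cases hE : a.eraseLead = 0
      · simp [hE]
      apply momL_mul_eq_zero (n := N - 1)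
      · refine natDegree_mul_le.trans ?_
        rw [natDegree_X_pow]
        have : a.eraseLead.natDegree < a.natDegree := by
          rcases eraseLead_natDegree_lt_or_eraseLead_eq_zero a with h | h
          · exact h
          · exact absurd h hE
        omega
      · intro j hj; exact ih j (by omega)
    rw [h4, zero_add, smul_eq_mul] at h3
    exact (mul_eq_zero.1 h3).resolve_left (leadingCoeff_ne_zero.2 ha0)
  exact ⟨p, hdeg, fun f => momL_mul_eq_zero le_rfl fun i _ => key i⟩

open UniqueFactorizationMonoid in
lemma splits_of_irred {f : ℝ[X]} (hf0 : f ≠ 0)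
    (hf : ∀ g : ℝ[X], Irreducible g → g ∣ f → degree g = 1) : f.Splits := by
  obtain ⟨u, hu⟩ := factors_prod hf0
  rw [← hu]
  refine (Splits.multisetProd fun g hg ↦ ?_).mul u.isUnit.splits
  exact Splits.of_degree_eq_one (hf g (irreducible_of_factor g hg) (dvd_of_mem_factors hg))

lemma ann_roots {s : ℕ → ℝ} {k : ℕ}
    (pd : ∀ f : ℝ[X], f ≠ 0 → f.natDegree ≤ k → 0 < momL s (f * f))
    {p : ℝ[X]} (hpd : p.natDegree = k + 1) (hp : ∀ f, momL s (p * f) = 0) :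
    p.roots.toFinset.card = k + 1 ∧ ∀ f : ℝ[X], (∀ x ∈ p.roots.toFinset, f.eval x = 0) → p ∣ f := by
  have hp0 : p ≠ 0 := by rintro rfl; simp at hpd
  have hs : p.Splits := by
    refine splits_of_irred hp0 fun g hg hgp => ?_
    obtain ⟨z, hz⟩ := IsAlgClosed.exists_aeval_eq_zero ℂ g (degree_pos_of_irreducible hg).ne'
    by_cases hi : z.im = 0
    · have hzr : z = algebraMap ℝ ℂ z.re := by apply Complex.ext <;> simp [hi]
      rw [hzr, aeval_algebraMap_apply] at hz
      exact degree_eq_one_of_irreducible_of_root hg (x := z.re) (by simpa using hz)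
    · exfalso
      obtain ⟨h, hh⟩ := (g.quadratic_dvd_of_aeval_eq_zero_im_ne_zero hz hi).trans hgp
      have hq : (X ^ 2 - C (2 * z.re) * X + C (‖z‖ ^ 2) : ℝ[X]) =
          (X - C z.re) ^ 2 + C (z.im ^ 2) := by
        rw [Complex.sq_norm, Complex.normSq_apply]
        simp only [C_mul, C_add, C_pow, C_ofNat]
        ring
      have hdq : (X ^ 2 - C (2 * z.re) * X + C (‖z‖ ^ 2) : ℝ[X]).natDegree = 2 := by
        compute_degree!
      have hh0 : h ≠ 0 := by rintro rfl; simp at hh; exact hp0 hh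
      have hd : p.natDegree = 2 + h.natDegree := by
        rw [hh, natDegree_mul _ hh0, hdq]
        intro h0; rw [h0] at hdq; simp at hdq
      have h1 := pd ((X - C z.re) * h) (mul_ne_zero (X_sub_C_ne_zero _) hh0) (by
        rw [natDegree_mul (X_sub_C_ne_zero _) hh0, natDegree_X_sub_C]; omega)
      have h2 := pd h hh0 (by omega)
      have e : p * h = (X - C z.re) * h * ((X - C z.re) * h) + z.im ^ 2 • (h * h) := by
        rw [hh, hq, smul_eq_C_mul]; ring
      have h3 := hp h
      rw [e, map_add, map_smul, smul_eq_mul] at h3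
      have := mul_nonneg (sq_nonneg z.im) h2.le
      linarith
  have hn : p.roots.Nodup := by
    rw [Multiset.nodup_iff_count_le_one]
    intro a
    by_contra! hc
    rw [count_roots] at hc
    obtain ⟨h, hh⟩ := (le_rootMultiplicity_iff hp0).1 (show 2 ≤ p.rootMultiplicity a from hc)
    have hh0 : h ≠ 0 := by rintro rfl; simp at hh; exact hp0 hh
    have hd : p.natDegree = 2 + h.natDegree := by
      rw [hh, natDegree_mul (pow_ne_zero _ (X_sub_C_ne_zero a)) hh0]; simp
    have h1 := pd ((X - C a) * h) (mul_ne_zero (X_sub_C_ne_zero a) hh0) (by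
      rw [natDegree_mul (X_sub_C_ne_zero a) hh0, natDegree_X_sub_C]; omega)
    have e : (X - C a) * h * ((X - C a) * h) = p * h := by rw [hh]; ring
    rw [e, hp] at h1
    exact h1.false
  refine ⟨?_, fun f hf => ?_⟩
  · rw [Multiset.toFinset_card_of_nodup hn, ← hs.natDegree_eq_card_roots, hpd]
  · rw [hs.eq_prod_roots]
    rw [(isUnit_C.2 (isUnit_iff_ne_zero.2 (leadingCoeff_ne_zero.2 hp0))).mul_left_dvd]
    by_cases hf0 : f = 0
    · simp [hf0]
    rw [Multiset.prod_X_sub_C_dvd_iff_le_roots hf0, Multiset.le_iff_subset hn]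
    intro x hx
    rw [mem_roots hf0]
    exact hf x (by simpa using hx)

lemma momL_eq_sum {s : ℕ → ℝ} {S : Finset ℝ} {w : ℝ → ℝ}
    (h : ∀ n, s n = ∑ x ∈ S, w x * x ^ n) (f : ℝ[X]) :
    momL s f = ∑ x ∈ S, w x * f.eval x := by
  induction f using Polynomial.induction_on' with
  | add p q hp hq => simp [hp, hq, mul_add, Finset.sum_add_distrib]
  | monomial n a =>
    rw [momL_mon, h, Finset.mul_sum]
    exact Finset.sum_congr rfl fun x _ => by rw [eval_monomial]; ring

/-- **Theorem.** -/
theorem moment_measure_finitely_many_points_iff (s : ℕ → ℝ) (k : ℕ) :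
    (∃ σ : Measure ℝ, IsFiniteMeasure σ ∧
        (∃ S : Finset ℝ, S.card = k + 1 ∧ σ (↑S : Set ℝ)ᶜ = 0 ∧ ∀ x ∈ S, 0 < σ {x}) ∧
        (∀ n : ℕ, ∫ u, u ^ n ∂σ = s n)) ↔
      ((∀ m ≤ k, 0 < hankelDet s m) ∧ ∀ m > k, hankelDet s m = 0) := by
  constructor
  · rintro ⟨σ, hfin, ⟨S, hc, hS, hpos⟩, hmom⟩
    have hres : σ.restrict (S : Set ℝ) = σ :=
      Measure.restrict_eq_self_of_ae_mem (by rw [ae_iff]; exact hS)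
    have hs : ∀ n, s n = ∑ x ∈ S, σ.real {x} * x ^ n := by
      intro n
      rw [← hmom n]
      conv_lhs => rw [← hres]
      rw [setIntegral_finset]
      · rfl
      · exact (continuous_pow n).continuousOn.integrableOn_compact S.finite_toSet.isCompact
    have hL := momL_eq_sum hs
    have hw : ∀ x ∈ S, 0 < σ.real {x} := fun x hx =>
      ENNReal.toReal_pos (hpos x hx).ne' (measure_ne_top _ _)
    constructor
    · intro m hm
      apply Matrix.PosDef.det_pos
      rw [hank_posDef]
      intro f hf hd
      rw [hL]
      refine Finset.sum_pos' (fun x hx => ?_) ?_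
      · rw [eval_mul]
        exact mul_nonneg (hw x hx).le (mul_self_nonneg _)
      · by_contra! hcon
        apply hf
        apply eq_zero_of_natDegree_lt_card_of_eval_eq_zero' f S _ (by omega)
        intro x hx
        by_contra h0
        have := hcon x hx
        rw [eval_mul] at this
        exact absurd (mul_pos (hw x hx) (mul_self_pos.2 h0)) (not_lt.2 this)
    · intro m hm
      rw [hank_zero]
      refine ⟨∏ x ∈ S, (X - C x), Finset.prod_ne_zero_iff.2 fun x _ => X_sub_C_ne_zero x, ?_, ?_⟩
      · rw [natDegree_prod_of_monic _ _ fun x _ => monic_X_sub_C x]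
        simp; omega
      · intro i _
        rw [hL]
        refine Finset.sum_eq_zero fun x hx => ?_
        rw [eval_mul, eval_prod, Finset.prod_eq_zero hx (by simp)]
        simp
  · rintro ⟨h1, h2⟩
    have pd := (hank_posDef s k).1 (hank_sylvester s k h1)
    obtain ⟨p, hpd, hp⟩ := exists_ann pd h2
    obtain ⟨hcard, hdvd⟩ := ann_roots pd hpd hp
    set S := p.roots.toFinset with hSdef
    have hLd : ∀ f : ℝ[X], (∀ x ∈ S, f.eval x = 0) → momL s f = 0 := by
      intro f hf
      obtain ⟨g, rfl⟩ := hdvd f hf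
      exact hp g
    let l : ℝ → ℝ[X] := fun x => Lagrange.basis S id x
    have hl1 : ∀ x ∈ S, (l x).eval x = 1 := fun x hx =>
      Lagrange.eval_basis_self (v := id) (Set.injOn_id _) hx
    have hl0 : ∀ x ∈ S, ∀ y ∈ S, x ≠ y → (l x).eval y = 0 := fun x _ y hy hxy =>
      Lagrange.eval_basis_of_ne (v := id) hxy hy
    let w : ℝ → ℝ := fun x => momL s (l x)
    have hw : ∀ x ∈ S, 0 < w x := by
      intro x hx
      have e : momL s (l x) = momL s (l x * l x) := by
        rw [← sub_eq_zero, ← map_sub]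
        apply hLd
        intro y hy
        by_cases hxy : x = y
        · subst hxy; simp [hl1 x hx]
        · simp [hl0 x hx y hy hxy]
      change 0 < momL s (l x)
      rw [e]
      apply pd
      · intro h0; have := hl1 x hx; rw [h0] at this; simp at this
      · have := Lagrange.natDegree_basis (v := id) (Set.injOn_id (S : Set ℝ)) hx
        change (l x).natDegree = _ at this
        omega
    have hsum : ∀ n, s n = ∑ x ∈ S, w x * x ^ n := by
      intro n
      have e : momL s (X ^ n - ∑ x ∈ S, (x ^ n) • l x) = 0 := by
        apply hLd
        intro y hy
        rw [eval_sub, eval_finsetSum, Finset.sum_eq_single y]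
        · simp [hl1 y hy]
        · intro x hx hxy; simp [hl0 x hx y hy hxy]
        · intro h; exact absurd hy h
      rw [map_sub, momL_X_pow, map_sum, sub_eq_zero] at e
      rw [e]
      exact Finset.sum_congr rfl fun x _ => by rw [map_smul, smul_eq_mul, mul_comm]
    refine ⟨∑ x ∈ S, ENNReal.ofReal (w x) • Measure.dirac x, ?_, ⟨S, hcard, ?_, ?_⟩, ?_⟩
    · refine ⟨?_⟩
      simp [Measure.finsetSum_apply]
    · rw [Measure.finsetSum_apply]
      refine Finset.sum_eq_zero fun x hx => ?_
      simp [hx]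
    · intro x hx
      rw [Measure.finsetSum_apply]
      refine lt_of_lt_of_le ?_ (Finset.single_le_sum (fun _ _ => zero_le) hx)
      simp [hw x hx]
    · intro n
      rw [integral_finsetSum_measure, hsum n]
      · refine Finset.sum_congr rfl fun x hx => ?_
        rw [integral_smul_measure, integral_dirac, ENNReal.toReal_ofReal (hw x hx).le, smul_eq_mul]
      · intro x _
        exact (integrable_dirac (by simp)).smul_measure ENNReal.ofReal_ne_top
end

section
/- If σ is a measure on ℝ with all moments finite (∫_ℝ |u|^k dσ(u) < ∞ for all k ≥ 0) and σ is the solution of a determinate moment problem (i.e., any measure on ℝ with the same moments as σ equals σ), then the set of (real) polynomial functions is dense in L²(σ). -/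
open MeasureTheory

/-- Continuous functions of polynomial growth. -/
def polyGrowth : Submodule ℝ (ℝ → ℝ) where
  carrier := {f | Continuous f ∧ ∃ p : Polynomial ℝ, ∀ x, |f x| ≤ p.eval x}
  zero_mem' := ⟨continuous_const, 0, by simp⟩
  add_mem' := by
    rintro f g ⟨hf, p, hp⟩ ⟨hg, q, hq⟩
    refine ⟨hf.add hg, p + q, fun x => ?_⟩
    rw [Polynomial.eval_add]
    exact (abs_add_le _ _).trans (add_le_add (hp x) (hq x))
  smul_mem' := by
    rintro c f ⟨hf, p, hp⟩
    refine ⟨hf.const_smul c, Polynomial.C |c| * p, fun x => ?_⟩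
    simp only [Pi.smul_apply, smul_eq_mul, abs_mul, Polynomial.eval_mul, Polynomial.eval_C]
    exact mul_le_mul_of_nonneg_left (hp x) (abs_nonneg c)

theorem poly_mem (p : Polynomial ℝ) : (fun x => p.eval x) ∈ polyGrowth := by
  refine ⟨p.continuous, 1 + p ^ 2, fun x => ?_⟩
  simp only [Polynomial.eval_add, Polynomial.eval_one, Polynomial.eval_pow]
  nlinarith [sq_abs (p.eval x), sq_nonneg (|p.eval x| - 1)]

theorem mem_of_abs_le {f g : ℝ → ℝ} (hf : Continuous f) (hg : g ∈ polyGrowth)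
    (h : ∀ x, |f x| ≤ |g x|) : f ∈ polyGrowth := by
  obtain ⟨_, p, hp⟩ := hg
  exact ⟨hf, p, fun x => (h x).trans (hp x)⟩

def polyE (p : Polynomial ℝ) : polyGrowth := ⟨fun x => p.eval x, poly_mem p⟩

/-- Cutoff functions. -/
noncomputable def cutoff (n : ℕ) (x : ℝ) : ℝ := max 0 (min 1 ((n : ℝ) + 1 - |x|))

theorem cutoff_cont (n : ℕ) : Continuous (cutoff n) := by unfold cutoff; fun_prop

theorem cutoff_nonneg (n : ℕ) (x : ℝ) : 0 ≤ cutoff n x := le_max_left _ _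

theorem cutoff_le (n : ℕ) (x : ℝ) : cutoff n x ≤ 1 := max_le zero_le_one (min_le_left _ _)

theorem cutoff_eq (n : ℕ) (x : ℝ) (h : |x| ≤ n) : cutoff n x = 1 := by
  unfold cutoff; rw [min_eq_left (by linarith), max_eq_right zero_le_one]

theorem cutoff_supp (n : ℕ) : HasCompactSupport (cutoff n) := by
  refine HasCompactSupport.intro (isCompact_closedBall (0 : ℝ) (n + 1)) fun x hx => ?_
  rw [Metric.mem_closedBall, dist_zero_right, Real.norm_eq_abs, not_le] at hx
  unfold cutoff
  exact max_eq_left ((min_le_right _ _).trans (by linarith))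

theorem cutoff_tendsto (x : ℝ) :
    Filter.Tendsto (fun n => cutoff n x) Filter.atTop (nhds 1) := by
  obtain ⟨N, hN⟩ := exists_nat_ge |x|
  refine tendsto_const_nhds.congr' ?_
  filter_upwards [Filter.eventually_ge_atTop N] with n hn
  rw [cutoff_eq]
  exact hN.trans (by exact_mod_cast hn)

theorem cutoff_err (n : ℕ) (x : ℝ) : (n : ℝ) * (1 - cutoff n x) ≤ 1 + x ^ 2 := by
  rcases le_total |x| n with h | h
  · rw [cutoff_eq n x h]; simp; positivity
  · have h1 := cutoff_nonneg n x
    have h2 : (0 : ℝ) ≤ n := n.cast_nonneg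
    nlinarith [sq_abs x, sq_nonneg (|x| - 1), mul_nonneg h2 h1]

open scoped CompactlySupported in
theorem cc_mem (f : C_c(ℝ, ℝ)) : (f : ℝ → ℝ) ∈ polyGrowth := by
  obtain ⟨C, hC⟩ := f.hasCompactSupport.exists_bound_of_continuous f.continuous
  exact ⟨f.continuous, Polynomial.C C, fun x => by simpa using hC x⟩

open scoped CompactlySupported in
/-- Positive functionals on continuous functions of polynomial growth are integrals. -/
theorem exists_measure (L : polyGrowth →ₗ[ℝ] ℝ)
    (hL : ∀ f : polyGrowth, (∀ x, 0 ≤ f.1 x) → 0 ≤ L f) :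
    ∃ μ : Measure ℝ, ∀ f : polyGrowth, Integrable f.1 μ ∧ ∫ x, f.1 x ∂μ = L f := by
  have hmono : ∀ f g : polyGrowth, (∀ x, f.1 x ≤ g.1 x) → L f ≤ L g := by
    intro f g h
    have := hL (g - f) (fun x => by simpa using h x)
    rw [map_sub] at this; linarith
  let L0 : C_c(ℝ, ℝ) →ₗ[ℝ] ℝ :=
    { toFun := fun f => L ⟨f, cc_mem f⟩
      map_add' := fun f g => by rw [← map_add]; rfl
      map_smul' := fun c f => by rw [RingHom.id_apply, ← map_smul]; rfl }
  let Λ : C_c(ℝ, ℝ) →ₚ[ℝ] ℝ := PositiveLinearMap.mk₀ L0 (fun f hf => hL _ (fun x => hf x))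
  let μ := RealRMK.rieszMeasure Λ
  have hμ : ∀ f : C_c(ℝ, ℝ), ∫ x, f x ∂μ = L ⟨f, cc_mem f⟩ :=
    fun f => RealRMK.integral_rieszMeasure Λ f
  refine ⟨μ, ?_⟩
  let T : polyGrowth → ℕ → C_c(ℝ, ℝ) := fun f n =>
    { toFun := fun x => f.1 x * cutoff n x
      continuous_toFun := f.2.1.mul (cutoff_cont n)
      hasCompactSupport' := (cutoff_supp n).mul_left }
  have hT : ∀ f n x, T f n x = f.1 x * cutoff n x := fun f n x => rfl
  have hTlim : ∀ f x, Filter.Tendsto (fun n => T f n x) Filter.atTop (nhds (f.1 x)) := by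
    intro f x
    simpa [hT] using (cutoff_tendsto x).const_mul (f.1 x)
  have hLlim : ∀ f : polyGrowth, Filter.Tendsto (fun n => L ⟨T f n, cc_mem _⟩) Filter.atTop
      (nhds (L f)) := by
    intro f
    obtain ⟨p, hp⟩ := f.2.2
    let q := polyE (p * (1 + Polynomial.X ^ 2))
    have key : ∀ n : ℕ, (n : ℝ) * |L ⟨T f n, cc_mem _⟩ - L f| ≤ L q := by
      intro n
      have hb : ∀ x, |(n : ℝ) * (f.1 x * cutoff n x - f.1 x)| ≤ q.1 x := by
        intro x
        have e : (n : ℝ) * (f.1 x * cutoff n x - f.1 x)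
          = - (f.1 x * (n * (1 - cutoff n x))) := by ring
        have h0 : 0 ≤ (n : ℝ) * (1 - cutoff n x) :=
          mul_nonneg n.cast_nonneg (by linarith [cutoff_le n x])
        rw [e, abs_neg, abs_mul, abs_of_nonneg h0]
        simp only [q, polyE, Polynomial.eval_mul, Polynomial.eval_add, Polynomial.eval_one,
          Polynomial.eval_pow, Polynomial.eval_X]
        exact mul_le_mul (hp x) (cutoff_err n x) h0 ((abs_nonneg _).trans (hp x))
      have h1 : L ((n : ℝ) • (⟨T f n, cc_mem _⟩ - f)) ≤ L q :=
        hmono _ _ (fun x => (le_abs_self _).trans (hb x))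
      have h2 : L (-((n : ℝ) • (⟨T f n, cc_mem _⟩ - f))) ≤ L q :=
        hmono _ _ (fun x => (neg_le_abs _).trans (hb x))
      rw [map_neg] at h2
      rw [map_smul, map_sub, smul_eq_mul] at h1 h2
      rw [← abs_of_nonneg (n.cast_nonneg : (0 : ℝ) ≤ n), ← abs_mul]
      exact abs_le.2 ⟨by simpa using by linarith, by simpa using h1⟩
    rw [tendsto_iff_dist_tendsto_zero]
    refine squeeze_zero' (Filter.Eventually.of_forall fun _ => dist_nonneg) ?_
      (tendsto_const_div_atTop_nhds_zero_nat (L q))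
    filter_upwards [Filter.eventually_gt_atTop 0] with n hn
    have hn' : (0 : ℝ) < n := by exact_mod_cast hn
    rw [le_div_iff₀ hn', mul_comm, Real.dist_eq]
    exact key n
  have hTint : ∀ f n, Integrable (T f n) μ := fun f n =>
    (T f n).continuous.integrable_of_hasCompactSupport (T f n).hasCompactSupport
  have hInt0 : ∀ f : polyGrowth, (∀ x, 0 ≤ f.1 x) → Integrable f.1 μ := by
    intro f hf
    refine integrable_of_tendsto (G := fun n => T f n)
      (Filter.Eventually.of_forall (hTlim f)) (fun n => (hTint f n).aestronglyMeasurable) ?_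
    have hle : ∀ n, ∫⁻ x, ‖T f n x‖ₑ ∂μ ≤ ENNReal.ofReal (L f) := by
      intro n
      have hnn : ∀ x, 0 ≤ T f n x := fun x => mul_nonneg (hf x) (cutoff_nonneg n x)
      have : ∫⁻ x, ‖T f n x‖ₑ ∂μ = ENNReal.ofReal (∫ x, T f n x ∂μ) := by
        rw [ofReal_integral_eq_lintegral_ofReal (hTint f n) (Filter.Eventually.of_forall hnn)]
        exact lintegral_congr fun x => Real.enorm_of_nonneg (hnn x)
      rw [this, hμ]
      refine ENNReal.ofReal_le_ofReal (hmono _ _ fun x => ?_)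
      exact mul_le_of_le_one_right (hf x) (cutoff_le n x)
    refine ne_top_of_le_ne_top (ENNReal.ofReal_ne_top (r := L f)) ?_
    exact Filter.liminf_le_of_le (by isBoundedDefault) (fun b hb => by
      obtain ⟨n, hn⟩ := hb.exists
      exact hn.trans (hle n))
  have hInt : ∀ f : polyGrowth, Integrable f.1 μ := by
    intro f
    have habs : (fun x => |f.1 x|) ∈ polyGrowth :=
      mem_of_abs_le f.2.1.abs f.2 (fun x => by simp)
    exact (hInt0 ⟨_, habs⟩ (fun x => abs_nonneg _)).mono' f.2.1.aestronglyMeasurable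
      (Filter.Eventually.of_forall fun x => le_rfl)
  intro f
  refine ⟨hInt f, ?_⟩
  have h1 : Filter.Tendsto (fun n => ∫ x, T f n x ∂μ) Filter.atTop (nhds (∫ x, f.1 x ∂μ)) := by
    refine tendsto_integral_of_dominated_convergence (fun x => |f.1 x|)
      (fun n => (hTint f n).aestronglyMeasurable) (hInt f).abs (fun n => ?_)
      (Filter.Eventually.of_forall (hTlim f))
    refine Filter.Eventually.of_forall fun x => ?_
    rw [hT, Real.norm_eq_abs, abs_mul, abs_of_nonneg (cutoff_nonneg n x)]
    exact mul_le_of_le_one_right (abs_nonneg _) (cutoff_le n x)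
  have h2 : (fun n => ∫ x, T f n x ∂μ) = fun n => L ⟨T f n, cc_mem _⟩ := funext fun n => hμ _
  rw [h2] at h1
  exact tendsto_nhds_unique h1 (hLlim f)

open Polynomial in
theorem sos_of_nonneg (n : ℕ) : ∀ s : ℝ[X], s.natDegree ≤ n → (∀ x : ℝ, 0 ≤ s.eval x) →
    ∃ A B : ℝ[X], s = A ^ 2 + B ^ 2 := by
  induction n using Nat.strong_induction_on with
  | _ n ih =>
  intro s hn hs
  by_cases hd : s.natDegree = 0
  · obtain ⟨c, rfl⟩ := natDegree_eq_zero.1 hd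
    have hc : 0 ≤ c := by simpa using hs 0
    refine ⟨C (Real.sqrt c), 0, ?_⟩
    rw [← C_pow, Real.sq_sqrt hc]; simp
  have hs0 : s ≠ 0 := by rintro rfl; simp at hd
  have hdeg : (s.map (algebraMap ℝ ℂ)).degree ≠ 0 := by
    rw [degree_map]
    intro h; exact hd (natDegree_eq_of_degree_eq_some h)
  obtain ⟨z, hz⟩ := IsAlgClosed.exists_root _ hdeg
  have hz' : aeval z s = 0 := by simpa [IsRoot, eval_map_algebraMap] using hz
  by_cases him : z.im = 0
  · set w := z.re
    have hzw : z = (w : ℂ) := Complex.ext (by simp [w]) (by simp [him])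
    have hw : s.eval w = 0 := by
      rw [hzw] at hz'
      have := aeval_algebraMap_apply ℂ w s
      rw [show (algebraMap ℝ ℂ w) = (w : ℂ) from rfl, hz'] at this
      have h2 : ((aeval w s : ℝ) : ℂ) = 0 := this.symm
      simpa [coe_aeval_eq_eval] using h2
    obtain ⟨q, hq⟩ := dvd_iff_isRoot.2 hw
    have hmin : IsLocalMin (fun x => s.eval x) w := by
      refine Filter.Eventually.of_forall fun x => ?_
      simp only [hw]; exact hs x
    have hder := hmin.deriv_eq_zero
    rw [Polynomial.deriv] at hder
    have hqw : q.eval w = 0 := by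
      rw [hq] at hder; simpa [derivative_mul] using hder
    obtain ⟨q2, hq2⟩ := dvd_iff_isRoot.2 hqw
    have hq2ne : q2 ≠ 0 := by rintro rfl; simp [hq2] at hq; exact hs0 hq
    have hqne : q ≠ 0 := by rintro rfl; simp at hq; exact hs0 hq
    have hdg : q2.natDegree < n := by
      have h1 : s.natDegree = 1 + q.natDegree := by
        rw [hq, natDegree_mul (X_sub_C_ne_zero w) hqne, natDegree_X_sub_C]
      have h2 : q.natDegree = 1 + q2.natDegree := by
        rw [hq2, natDegree_mul (X_sub_C_ne_zero w) hq2ne, natDegree_X_sub_C]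
      omega
    have hnn : ∀ x, 0 ≤ q2.eval x := by
      have hcl : IsClosed {x : ℝ | 0 ≤ q2.eval x} := isClosed_le continuous_const q2.continuous
      have hsub : ({w}ᶜ : Set ℝ) ⊆ {x : ℝ | 0 ≤ q2.eval x} := by
        intro x hx
        have hx' : x - w ≠ 0 := sub_ne_zero.2 hx
        have := hs x
        rw [hq, hq2] at this
        simp only [eval_mul, eval_sub, eval_X, eval_C, ← mul_assoc] at this
        have h3 : 0 < (x - w) * (x - w) := mul_self_pos.2 hx'
        exact (mul_nonneg_iff_of_pos_left h3).1 this
      have := closure_minimal hsub hcl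
      rw [(dense_compl_singleton w).closure_eq] at this
      exact fun x => this (Set.mem_univ x)
    obtain ⟨A, B, hAB⟩ := ih _ hdg q2 le_rfl hnn
    refine ⟨(X - C w) * A, (X - C w) * B, ?_⟩
    rw [hq, hq2, hAB]; ring
  · obtain ⟨q, hq⟩ := quadratic_dvd_of_aeval_eq_zero_im_ne_zero s hz' him
    set d : ℝ[X] := X ^ 2 - C (2 * z.re) * X + C (‖z‖ ^ 2) with hddef
    have hd2 : d = (X - C z.re) ^ 2 + C z.im ^ 2 := by
      rw [hddef, Complex.sq_norm, Complex.normSq_apply]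
      simp only [C_add, C_mul, map_ofNat]; ring
    have hdm : d.natDegree = 2 := by rw [hddef]; compute_degree!
    have hdne : d ≠ 0 := by intro h; rw [h] at hdm; simp at hdm
    have hqne : q ≠ 0 := by rintro rfl; simp at hq; exact hs0 hq
    have hdg : q.natDegree < n := by
      have : s.natDegree = 2 + q.natDegree := by rw [hq, natDegree_mul hdne hqne, hdm]
      omega
    have hnn : ∀ x, 0 ≤ q.eval x := by
      intro x
      have := hs x
      rw [hq, eval_mul] at this
      refine (mul_nonneg_iff_of_pos_left ?_).1 this
      rw [hd2]; simp only [eval_add, eval_pow, eval_sub, eval_X, eval_C]; positivity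
    obtain ⟨A, B, hAB⟩ := ih _ hdg q le_rfl hnn
    refine ⟨(X - C z.re) * A - C z.im * B, (X - C z.re) * B + C z.im * A, ?_⟩
    rw [hq, hd2, hAB]; ring

open Polynomial in
theorem exists_re_im (Q : ℂ[X]) : ∃ P R : ℝ[X], ∀ x : ℝ,
    Q.eval (x : ℂ) = ((P.eval x : ℝ) : ℂ) + Complex.I * ((R.eval x : ℝ) : ℂ) := by
  induction Q using Polynomial.induction_on' with
  | add p q hp hq =>
    obtain ⟨P, R, h⟩ := hp
    obtain ⟨P', R', h'⟩ := hq
    refine ⟨P + P', R + R', fun x => ?_⟩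
    simp [h, h']; ring
  | monomial n a =>
    refine ⟨C a.re * X ^ n, C a.im * X ^ n, fun x => ?_⟩
    simp only [eval_monomial, eval_mul, eval_C, eval_pow, eval_X]
    conv_lhs => rw [← Complex.re_add_im a]
    push_cast; ring

open Polynomial in
theorem approx_of_sos_aux (A B : ℝ[X])
    (hc : 1 ≤ ‖aeval Complex.I A + Complex.I * aeval Complex.I B‖) :
    ∃ P R : ℝ[X], ∀ x : ℝ,
      (x / (1 + x ^ 2) - P.eval x) ^ 2 + (1 / (1 + x ^ 2) - R.eval x) ^ 2 ≤ (A.eval x ^ 2 + B.eval x ^ 2) / (1 + x ^ 2) := by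
  set c := aeval Complex.I A + Complex.I * aeval Complex.I B with hcdef
  have hc0 : c ≠ 0 := by intro h; rw [h] at hc; norm_num at hc
  let r : ℂ[X] := A.map (algebraMap ℝ ℂ) + C Complex.I * B.map (algebraMap ℝ ℂ)
  have hrI : r.eval Complex.I = c := by simp [r, hcdef, eval_map_algebraMap]
  have hroot : (1 - C c⁻¹ * r).IsRoot Complex.I := by
    simp [IsRoot, hrI, hc0]
  obtain ⟨Q, hQ⟩ := dvd_iff_isRoot.2 hroot
  obtain ⟨P, R, hPR⟩ := exists_re_im Q
  refine ⟨P, R, fun x => ?_⟩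
  have hrx : r.eval (x : ℂ) = ((A.eval x : ℝ) : ℂ) + Complex.I * ((B.eval x : ℝ) : ℂ) := by
    simp only [r, eval_add, eval_mul, eval_C]
    have h : ∀ p : ℝ[X], eval (x : ℂ) (p.map (algebraMap ℝ ℂ)) = ((p.eval x : ℝ) : ℂ) := by
      intro p
      rw [show (x : ℂ) = algebraMap ℝ ℂ x from rfl, eval_map_apply]; rfl
    rw [h, h]
  have h1 := congrArg (eval (x : ℂ)) hQ
  simp only [eval_sub, eval_one, eval_mul, eval_C, eval_X, hrx, hPR] at h1
  set a := A.eval x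
  set b := B.eval x
  set p := P.eval x
  set q := R.eval x
  have hns : Complex.normSq (1 - ((x : ℂ) - Complex.I) * ((p : ℂ) + Complex.I * (q : ℂ)))
      ≤ a ^ 2 + b ^ 2 := by
    rw [← h1]
    have : (1 : ℂ) - (1 - c⁻¹ * ((a : ℂ) + Complex.I * (b : ℂ))) =
      c⁻¹ * ((a : ℂ) + Complex.I * (b : ℂ)) := by ring
    rw [this, Complex.normSq_mul, Complex.normSq_inv]
    have h2 : Complex.normSq ((a : ℂ) + Complex.I * (b : ℂ)) = a ^ 2 + b ^ 2 := by
      rw [Complex.normSq_apply]; simp; ring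
    have h3 : 1 ≤ Complex.normSq c := by rw [Complex.normSq_eq_norm_sq]; nlinarith
    rw [h2]
    exact mul_le_of_le_one_left (by positivity) (inv_le_one_of_one_le₀ h3)
  rw [Complex.normSq_apply] at hns
  simp at hns
  have hx : 0 < 1 + x ^ 2 := by positivity
  rw [le_div_iff₀ hx]
  have h4 : (1 / (1 + x ^ 2) - q) ^ 2 * (1 + x ^ 2) + (x / (1 + x ^ 2) - p) ^ 2 * (1 + x ^ 2)
     = (1 - (x * p + q)) * (1 - (x * p + q)) + (x * q - p) * (x * q - p) := by
    field_simp; ring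
  nlinarith

open Polynomial in
theorem approx_of_nonneg (s : ℝ[X]) (hs : ∀ x : ℝ, 0 ≤ s.eval x) (h1 : aeval Complex.I s = 1) :
    ∃ P R : ℝ[X], ∀ x : ℝ,
      (x / (1 + x ^ 2) - P.eval x) ^ 2 + (1 / (1 + x ^ 2) - R.eval x) ^ 2 ≤ s.eval x / (1 + x ^ 2) := by
  obtain ⟨A, B, rfl⟩ := sos_of_nonneg _ s le_rfl hs
  set a := aeval Complex.I A with ha
  set b := aeval Complex.I B with hb
  have hab : (a + Complex.I * b) * (a + Complex.I * (-b)) = 1 := by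
    rw [← h1]; simp only [map_add, map_pow, ← ha, ← hb]
    linear_combination (-b ^ 2) * Complex.I_sq
  have hn := congrArg norm hab
  rw [norm_mul, norm_one] at hn
  rcases le_total 1 ‖a + Complex.I * b‖ with h | h
  · obtain ⟨P, R, hR⟩ := approx_of_sos_aux A B h
    exact ⟨P, R, fun x => by simpa using hR x⟩
  · obtain ⟨P, R, hR⟩ := approx_of_sos_aux A (-B) (by
      rw [map_neg, ← ha, ← hb]
      nlinarith [norm_nonneg (a + Complex.I * b), norm_nonneg (a + Complex.I * -b)])
    exact ⟨P, R, fun x => by simpa using hR x⟩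

theorem poly_integrable {σ : Measure ℝ}
    (hmom : ∀ k : ℕ, Integrable (fun u : ℝ => |u| ^ k) σ) (p : Polynomial ℝ) :
    Integrable (fun x => p.eval x) σ := by
  induction p using Polynomial.induction_on' with
  | add p q hp hq =>
    simp only [Polynomial.eval_add]
    exact hp.add hq
  | monomial n a =>
    simp only [Polynomial.eval_monomial]
    refine Integrable.const_mul ?_ a
    exact (hmom n).mono' (continuous_pow n).aestronglyMeasurable
      (Filter.Eventually.of_forall fun x => by simp)

theorem growth_integrable {σ : Measure ℝ}
    (hmom : ∀ k : ℕ, Integrable (fun u : ℝ => |u| ^ k) σ) {f : ℝ → ℝ} (hf : f ∈ polyGrowth) :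
    Integrable f σ := by
  obtain ⟨hc, p, hp⟩ := hf
  exact (poly_integrable hmom p).mono' hc.aestronglyMeasurable (Filter.Eventually.of_forall hp)

theorem one_sided (σ : Measure ℝ)
    (hmom : ∀ k : ℕ, Integrable (fun u : ℝ => |u| ^ k) σ)
    (hdet : ∀ μ : Measure ℝ,
      (∀ k : ℕ, Integrable (fun u : ℝ => |u| ^ k) μ) →
      (∀ k : ℕ, ∫ u, u ^ k ∂μ = ∫ u, u ^ k ∂σ) → μ = σ)
    (f : polyGrowth) (ε : ℝ) (hε : 0 < ε) :
    ∃ p : Polynomial ℝ, (∀ x, f.1 x ≤ p.eval x) ∧ ∫ x, p.eval x ∂σ < ∫ x, f.1 x ∂σ + ε := by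
  have hpi := poly_integrable hmom
  let S : polyGrowth → Set ℝ := fun g =>
    {t | ∃ p : Polynomial ℝ, (∀ x, g.1 x ≤ p.eval x) ∧ ∫ x, p.eval x ∂σ = t}
  have hSne : ∀ g, (S g).Nonempty := by
    intro g
    obtain ⟨p, hp⟩ := g.2.2
    exact ⟨_, p, fun x => (le_abs_self _).trans (hp x), rfl⟩
  have hSlb : ∀ g, ∀ t ∈ S g, ∫ x, g.1 x ∂σ ≤ t := by
    rintro g t ⟨p, hp, rfl⟩
    exact integral_mono (growth_integrable hmom g.2) (hpi p) hp
  have hSbdd : ∀ g, BddBelow (S g) := fun g => ⟨_, fun t ht => hSlb g t ht⟩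
  let N : polyGrowth → ℝ := fun g => sInf (S g)
  have hNle : ∀ g, ∀ p : Polynomial ℝ, (∀ x, g.1 x ≤ p.eval x) → N g ≤ ∫ x, p.eval x ∂σ :=
    fun g p hp => csInf_le (hSbdd g) ⟨p, hp, rfl⟩
  have hleN : ∀ g, ∫ x, g.1 x ∂σ ≤ N g := fun g => le_csInf (hSne g) (hSlb g)
  have N_add : ∀ g h, N (g + h) ≤ N g + N h := by
    intro g h
    refine le_of_forall_pos_le_add fun δ hδ => ?_
    obtain ⟨_, ⟨p, hp, rfl⟩, hpt⟩ := Real.lt_sInf_add_pos (hSne g) (half_pos hδ)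
    obtain ⟨_, ⟨q, hq, rfl⟩, hqt⟩ := Real.lt_sInf_add_pos (hSne h) (half_pos hδ)
    have h1 := hNle (g + h) (p + q) (fun x => by
      rw [Polynomial.eval_add]; exact add_le_add (hp x) (hq x))
    simp only [Polynomial.eval_add] at h1
    rw [integral_add (hpi p) (hpi q)] at h1
    change _ ≤ sInf (S g) + sInf (S h) + δ
    linarith
  have N_smul_le : ∀ c : ℝ, 0 < c → ∀ g, N (c • g) ≤ c * N g := by
    intro c hc g
    refine le_of_forall_pos_le_add fun δ hδ => ?_
    obtain ⟨_, ⟨p, hp, rfl⟩, hpt⟩ := Real.lt_sInf_add_pos (hSne g) (div_pos hδ hc)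
    have h1 := hNle (c • g) (Polynomial.C c * p) (fun x => by
      rw [Polynomial.eval_mul, Polynomial.eval_C]
      exact mul_le_mul_of_nonneg_left (hp x) hc.le)
    simp only [Polynomial.eval_mul, Polynomial.eval_C] at h1
    rw [integral_const_mul] at h1
    have h2 := mul_lt_mul_of_pos_left hpt hc
    rw [mul_add, mul_div_cancel₀ _ hc.ne'] at h2
    exact (h1.trans_lt h2).le
  have N_hom : ∀ c : ℝ, 0 < c → ∀ g, N (c • g) = c * N g := by
    intro c hc g
    refine le_antisymm (N_smul_le c hc g) ?_
    have h1 := N_smul_le c⁻¹ (inv_pos.2 hc) (c • g)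
    rw [inv_smul_smul₀ hc.ne'] at h1
    have h2 := mul_le_mul_of_nonneg_left h1 hc.le
    rwa [mul_inv_cancel_left₀ hc.ne'] at h2
  have N_neg : ∀ g : polyGrowth, (∀ x, g.1 x ≤ 0) → N g ≤ 0 := by
    intro g hg
    simpa using hNle g 0 (fun x => by simpa using hg x)
  have N_zero : N 0 = 0 := by
    have := N_hom 2 (by norm_num) 0
    rw [smul_zero] at this; linarith
  have hf0 : ∀ c : ℝ, c • f = 0 → (RingHom.id ℝ) c • N f = 0 := by
    intro c hc
    rcases smul_eq_zero.1 hc with h | h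
    · simp [h]
    · simp [h, N_zero]
  let F : polyGrowth →ₗ.[ℝ] ℝ := LinearPMap.mkSpanSingleton' f (N f) hf0
  have hFN : ∀ x : F.domain, F x ≤ N x := by
    rintro ⟨x, hx⟩
    obtain ⟨c, rfl⟩ := Submodule.mem_span_singleton.1 hx
    have : F ⟨c • f, hx⟩ = c * N f := LinearPMap.mkSpanSingleton'_apply f (N f) hf0 c hx
    rw [this]
    change c * N f ≤ N (c • f)
    rcases lt_trichotomy c 0 with h | h | h
    · have h1 := N_add (c • f) ((-c) • f)
      rw [← add_smul, add_neg_cancel, zero_smul, N_zero, N_hom (-c) (by linarith)] at h1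
      linarith
    · subst h; simp [N_zero]
    · exact (N_hom c h f).ge
  obtain ⟨L, hLF, hLN⟩ := exists_extension_of_le_sublinear F N N_hom N_add hFN
  have hLf : L f = N f := by
    have hx : f ∈ F.domain := Submodule.mem_span_singleton_self f
    have h1 := hLF ⟨f, hx⟩
    rw [LinearPMap.mkSpanSingleton'_apply_self] at h1
    exact h1
  have hLpos : ∀ g : polyGrowth, (∀ x, 0 ≤ g.1 x) → 0 ≤ L g := by
    intro g hg
    have h1 := (hLN (-g)).trans (N_neg (-g) (fun x => by simpa using hg x))
    rw [map_neg] at h1; linarith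
  have hLp : ∀ p : Polynomial ℝ, L (polyE p) = ∫ x, p.eval x ∂σ := by
    intro p
    have h1 := (hLN (polyE p)).trans (hNle _ p fun x => le_rfl)
    have h2 := (hLN (-polyE p)).trans (hNle _ (-p) fun x => by simp [polyE])
    simp only [map_neg, Polynomial.eval_neg, integral_neg] at h2
    linarith
  obtain ⟨μ, hμ⟩ := exists_measure L hLpos
  have hμσ : μ = σ := by
    refine hdet μ (fun k => ?_) (fun k => ?_)
    · have hm : (fun u : ℝ => |u| ^ k) ∈ polyGrowth :=
        mem_of_abs_le (by fun_prop) (poly_mem (Polynomial.X ^ k)) (fun x => by simp)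
      exact (hμ ⟨_, hm⟩).1
    · have h1 := (hμ (polyE (Polynomial.X ^ k))).2
      rw [hLp] at h1
      simpa [polyE] using h1
  have hNf : N f = ∫ x, f.1 x ∂σ := by
    rw [← hLf, ← (hμ f).2, hμσ]
  obtain ⟨_, ⟨p, hp, rfl⟩, hpt⟩ := Real.lt_sInf_add_pos (hSne f) hε
  refine ⟨p, hp, ?_⟩
  rw [← hNf]; exact hpt

theorem approx_inv (σ : Measure ℝ)
    (hmom : ∀ k : ℕ, Integrable (fun u : ℝ => |u| ^ k) σ)
    (hdet : ∀ μ : Measure ℝ,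
      (∀ k : ℕ, Integrable (fun u : ℝ => |u| ^ k) μ) →
      (∀ k : ℕ, ∫ u, u ^ k ∂μ = ∫ u, u ^ k ∂σ) → μ = σ) (ε : ℝ) (hε : 0 < ε) :
    ∃ P R : Polynomial ℝ, ∫ x, (x / (1 + x ^ 2) - P.eval x) ^ 2 ∂σ < ε ∧
      ∫ x, (1 / (1 + x ^ 2) - R.eval x) ^ 2 ∂σ < ε := by
  have hcont : Continuous (fun x : ℝ => 1 / (1 + x ^ 2)) :=
    continuous_const.div (by fun_prop) (fun x => by positivity)
  have hm : (fun x : ℝ => 1 / (1 + x ^ 2)) ∈ polyGrowth := by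
    refine mem_of_abs_le hcont (poly_mem 1) (fun x => ?_)
    rw [abs_of_nonneg (by positivity)]
    simp only [Polynomial.eval_one, abs_one]
    rw [div_le_one (by positivity)]; nlinarith
  obtain ⟨p, hp, hpi⟩ := one_sided σ hmom hdet (-⟨_, hm⟩) ε hε
  have hp' : ∀ x : ℝ, 0 ≤ 1 / (1 + x ^ 2) + p.eval x := by
    intro x
    have h1 : -(1 / (1 + x ^ 2)) ≤ p.eval x := hp x
    linarith
  have hs : ∀ x : ℝ, (1 + (1 + Polynomial.X ^ 2) * p).eval x
      = (1 / (1 + x ^ 2) + p.eval x) * (1 + x ^ 2) := by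
    intro x
    have : (1 + x ^ 2) ≠ 0 := by positivity
    simp; field_simp
  obtain ⟨P, R, hR⟩ := approx_of_nonneg (1 + (1 + Polynomial.X ^ 2) * p)
    (fun x => by rw [hs]; exact mul_nonneg (hp' x) (by positivity)) (by simp)
  have hRR : ∀ x : ℝ, (x / (1 + x ^ 2) - P.eval x) ^ 2 + (1 / (1 + x ^ 2) - R.eval x) ^ 2
      ≤ 1 / (1 + x ^ 2) + p.eval x := by
    intro x
    have := hR x
    rwa [hs, mul_div_cancel_right₀ _ (by positivity)] at this
  have hi : Integrable (fun x : ℝ => 1 / (1 + x ^ 2) + p.eval x) σ :=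
    (growth_integrable hmom hm).add (poly_integrable hmom p)
  have hlt : ∫ x, (1 / (1 + x ^ 2) + p.eval x) ∂σ < ε := by
    have h1 : ∫ x, (1 / (1 + x ^ 2) + p.eval x) ∂σ
        = ∫ x, 1 / (1 + x ^ 2) ∂σ + ∫ x, p.eval x ∂σ :=
      integral_add (growth_integrable hmom hm) (poly_integrable hmom p)
    have h2 : ∫ x, (-(1 / (1 + x ^ 2)) : ℝ) ∂σ = -∫ x, 1 / (1 + x ^ 2) ∂σ := integral_neg _
    have h3 : ∫ x, p.eval x ∂σ < ∫ x, (-(1 / (1 + x ^ 2)) : ℝ) ∂σ + ε := hpi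
    linarith
  refine ⟨P, R, lt_of_le_of_lt ?_ hlt, lt_of_le_of_lt ?_ hlt⟩
  · refine integral_mono_of_nonneg (Filter.Eventually.of_forall fun x => sq_nonneg _) hi
      (Filter.Eventually.of_forall fun x => ?_)
    exact le_trans (le_add_of_nonneg_right (sq_nonneg _)) (hRR x)
  · refine integral_mono_of_nonneg (Filter.Eventually.of_forall fun x => sq_nonneg _) hi
      (Filter.Eventually.of_forall fun x => ?_)
    exact le_trans (le_add_of_nonneg_left (sq_nonneg _)) (hRR x)

/-- `g` is square integrable and orthogonal to all polynomials. -/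
def Orth (σ : Measure ℝ) (g : ℝ → ℝ) : Prop :=
  MemLp g 2 σ ∧ ∀ p : Polynomial ℝ, ∫ x, g x * p.eval x ∂σ = 0

theorem memLp_growth {σ : Measure ℝ}
    (hmom : ∀ k : ℕ, Integrable (fun u : ℝ => |u| ^ k) σ) {f : ℝ → ℝ} (hf : f ∈ polyGrowth) :
    MemLp f 2 σ := by
  rw [memLp_two_iff_integrable_sq hf.1.aestronglyMeasurable]
  obtain ⟨hc, p, hp⟩ := hf
  refine growth_integrable hmom ⟨hc.pow 2, p ^ 2, fun x => ?_⟩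
  rw [abs_pow, Polynomial.eval_pow]
  exact pow_le_pow_left₀ (abs_nonneg _) (hp x) 2

theorem inv_cont : Continuous (fun x : ℝ => 1 / (1 + x ^ 2)) :=
  continuous_const.div (by fun_prop) (fun x => by positivity)

theorem inv_bound (x : ℝ) : |1 / (1 + x ^ 2)| ≤ 1 := by
  rw [abs_of_nonneg (by positivity), div_le_one (by positivity)]; nlinarith

theorem inv_bound' (x : ℝ) : |x / (1 + x ^ 2)| ≤ 1 := by
  rw [abs_div, abs_of_nonneg (by positivity : 0 ≤ 1 + x ^ 2), div_le_one (by positivity)]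
  nlinarith [sq_abs x, sq_nonneg (|x| - 1)]

theorem orth_inv (σ : Measure ℝ)
    (hmom : ∀ k : ℕ, Integrable (fun u : ℝ => |u| ^ k) σ)
    {w : ℝ → ℝ} (hw : w ∈ polyGrowth)
    (happ : ∀ ε > 0, ∃ R : Polynomial ℝ, ∫ x, (w x - R.eval x) ^ 2 ∂σ < ε)
    {g : ℝ → ℝ} (hg : Orth σ g) : ∫ x, g x * w x ∂σ = 0 := by
  set G := ∫ x, g x ^ 2 ∂σ with hG
  have hG0 : 0 ≤ G := integral_nonneg fun x => sq_nonneg _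
  have hgi : Integrable (fun x => g x ^ 2) σ := hg.1.integrable_sq
  have key : ∀ δ : ℝ, 0 < δ → |∫ x, g x * w x ∂σ| ≤ δ * (G + 1) := by
    intro δ hδ
    obtain ⟨R, hR⟩ := happ (δ ^ 2) (by positivity)
    have hd : MemLp (fun x => w x - R.eval x) 2 σ :=
      (memLp_growth hmom hw).sub (memLp_growth hmom (poly_mem R))
    have hgd : Integrable (fun x => g x * (w x - R.eval x)) σ := hg.1.integrable_mul hd
    have hgR : Integrable (fun x => g x * R.eval x) σ :=
      hg.1.integrable_mul (memLp_growth hmom (poly_mem R))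
    have e : ∫ x, g x * w x ∂σ = ∫ x, g x * (w x - R.eval x) ∂σ := by
      have h1 := integral_add hgd hgR
      rw [hg.2 R, add_zero] at h1
      rw [← h1]
      congr 1; ext x; ring
    rw [e]
    have hpt : ∀ x, |g x * (w x - R.eval x)| ≤ δ * g x ^ 2 + δ⁻¹ * (w x - R.eval x) ^ 2 := by
      intro x
      set a := g x
      set b := w x - R.eval x
      have h1 : δ * a ^ 2 + δ⁻¹ * b ^ 2 = δ * (|a| - δ⁻¹ * |b|) ^ 2 + 2 * (|a| * |b|) := by
        rw [← sq_abs a, ← sq_abs b]; field_simp; ring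
      rw [h1, abs_mul]
      have : 0 ≤ δ * (|a| - δ⁻¹ * |b|) ^ 2 := by positivity
      nlinarith [mul_nonneg (abs_nonneg a) (abs_nonneg b)]
    have hb : Integrable (fun x => δ * g x ^ 2 + δ⁻¹ * (w x - R.eval x) ^ 2) σ :=
      (hgi.const_mul δ).add (hd.integrable_sq.const_mul δ⁻¹)
    calc |∫ x, g x * (w x - R.eval x) ∂σ| ≤ ∫ x, |g x * (w x - R.eval x)| ∂σ :=
          abs_integral_le_integral_abs
      _ ≤ ∫ x, (δ * g x ^ 2 + δ⁻¹ * (w x - R.eval x) ^ 2) ∂σ := integral_mono hgd.abs hb hpt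
      _ = δ * G + δ⁻¹ * ∫ x, (w x - R.eval x) ^ 2 ∂σ := by
          rw [integral_add (hgi.const_mul δ) (hd.integrable_sq.const_mul δ⁻¹),
            integral_const_mul, integral_const_mul]
      _ ≤ δ * G + δ⁻¹ * δ ^ 2 := by gcongr
      _ = δ * (G + 1) := by field_simp
  have hG1 : 0 < G + 1 := by linarith
  by_contra hne
  have hpos := abs_pos.2 hne
  have := key (|∫ x, g x * w x ∂σ| / (2 * (G + 1))) (by positivity)
  rw [show |∫ x, g x * w x ∂σ| / (2 * (G + 1)) * (G + 1) = |∫ x, g x * w x ∂σ| / 2 by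
    field_simp] at this
  linarith

theorem inv_cont' : Continuous (fun x : ℝ => x / (1 + x ^ 2)) :=
  continuous_id.div (by fun_prop) (fun x => by positivity)

open scoped BoundedContinuousFunction

/-- The bounded function `1 / (1 + x ^ 2)`. -/
noncomputable def hOne : ℝ →ᵇ ℝ :=
  BoundedContinuousFunction.ofNormedAddCommGroup (fun x : ℝ => 1 / (1 + x ^ 2)) inv_cont 1 inv_bound

/-- The bounded function `x / (1 + x ^ 2)`. -/
noncomputable def hTwo : ℝ →ᵇ ℝ :=
  BoundedContinuousFunction.ofNormedAddCommGroup (fun x : ℝ => x / (1 + x ^ 2)) inv_cont' 1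
    inv_bound'

theorem bcf_mem (h : ℝ →ᵇ ℝ) : (h : ℝ → ℝ) ∈ polyGrowth :=
  ⟨h.continuous, Polynomial.C ‖h‖, fun x => by simpa using h.norm_coe_le_norm x⟩

theorem memLp_bcf_mul {σ : Measure ℝ} {g : ℝ → ℝ} (hg : MemLp g 2 σ) (h : ℝ →ᵇ ℝ) :
    MemLp (fun x => h x * g x) 2 σ := by
  refine MemLp.of_le_mul (c := ‖h‖) hg (h.continuous.aestronglyMeasurable.mul hg.1)
    (Filter.Eventually.of_forall fun x => ?_)
  rw [norm_mul]
  exact mul_le_mul_of_nonneg_right (h.norm_coe_le_norm x) (norm_nonneg _)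

theorem orth_mul_one (σ : Measure ℝ)
    (hmom : ∀ k : ℕ, Integrable (fun u : ℝ => |u| ^ k) σ)
    (hdet : ∀ μ : Measure ℝ,
      (∀ k : ℕ, Integrable (fun u : ℝ => |u| ^ k) μ) →
      (∀ k : ℕ, ∫ u, u ^ k ∂μ = ∫ u, u ^ k ∂σ) → μ = σ)
    {g : ℝ → ℝ} (hg : Orth σ g) : Orth σ (fun x => hOne x * g x) := by
  refine ⟨memLp_bcf_mul hg.1 hOne, ?_⟩
  have hm := memLp_bcf_mul hg.1 hOne
  have hi : ∀ p : Polynomial ℝ, Integrable (fun x => hOne x * g x * p.eval x) σ := fun p =>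
    hm.integrable_mul (memLp_growth hmom (poly_mem p))
  have hi' : ∀ p : Polynomial ℝ, Integrable (fun x => g x * p.eval x) σ := fun p =>
    hg.1.integrable_mul (memLp_growth hmom (poly_mem p))
  have hX : ∀ k : ℕ, ∫ x, hOne x * g x * x ^ k ∂σ = 0 := by
    intro k
    induction k using Nat.strong_induction_on with
    | _ k ih =>
    match k with
    | 0 =>
      have := orth_inv σ hmom (bcf_mem hOne) (fun ε hε => by
        obtain ⟨P, R, h1, h2⟩ := approx_inv σ hmom hdet ε hε
        exact ⟨R, h2⟩) hg
      rw [← this]; congr 1; ext x; ring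
    | 1 =>
      have := orth_inv σ hmom (bcf_mem hTwo) (fun ε hε => by
        obtain ⟨P, R, h1, h2⟩ := approx_inv σ hmom hdet ε hε
        exact ⟨P, h1⟩) hg
      rw [← this]; congr 1; ext x
      change 1 / (1 + x ^ 2) * g x * x ^ 1 = g x * (x / (1 + x ^ 2))
      ring
    | k + 2 =>
      have h1 := ih k (by omega)
      have h2 := hg.2 (Polynomial.X ^ k)
      have h3 := integral_sub (hi' (Polynomial.X ^ k)) (hi (Polynomial.X ^ k))
      simp only [Polynomial.eval_pow, Polynomial.eval_X] at h2 h3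
      rw [h1, h2, sub_zero] at h3
      rw [← h3]; congr 1; ext x
      change 1 / (1 + x ^ 2) * g x * x ^ (k + 2) = g x * x ^ k - 1 / (1 + x ^ 2) * g x * x ^ k
      have : (1 + x ^ 2) ≠ 0 := by positivity
      field_simp; ring
  intro p
  induction p using Polynomial.induction_on' with
  | add p q hp hq =>
    simp only [Polynomial.eval_add, mul_add]
    rw [integral_add (hi p) (hi q), hp, hq, add_zero]
  | monomial n a =>
    simp only [Polynomial.eval_monomial]
    have h1 := hX n
    have h2 := integral_const_mul (μ := σ) a (fun x => hOne x * g x * x ^ n)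
    rw [h1, mul_zero] at h2
    rw [← h2]; congr 1; ext x; ring

theorem orth_mul_two (σ : Measure ℝ)
    (hmom : ∀ k : ℕ, Integrable (fun u : ℝ => |u| ^ k) σ)
    (hdet : ∀ μ : Measure ℝ,
      (∀ k : ℕ, Integrable (fun u : ℝ => |u| ^ k) μ) →
      (∀ k : ℕ, ∫ u, u ^ k ∂μ = ∫ u, u ^ k ∂σ) → μ = σ)
    {g : ℝ → ℝ} (hg : Orth σ g) : Orth σ (fun x => hTwo x * g x) := by
  refine ⟨memLp_bcf_mul hg.1 hTwo, fun p => ?_⟩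
  have h1 := (orth_mul_one σ hmom hdet hg).2 (Polynomial.X * p)
  rw [← h1]; congr 1; ext x
  simp only [Polynomial.eval_mul, Polynomial.eval_X]
  change x / (1 + x ^ 2) * g x * _ = 1 / (1 + x ^ 2) * g x * _
  ring

/-- Bounded multipliers preserving the orthogonal complement of polynomials. -/
noncomputable def multAlg (σ : Measure ℝ)
    (hmom : ∀ k : ℕ, Integrable (fun u : ℝ => |u| ^ k) σ) : StarSubalgebra ℝ (ℝ →ᵇ ℝ) where
  carrier := {h | ∀ g, Orth σ g → Orth σ (fun x => h x * g x)}
  mul_mem' := by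
    intro a b ha hb g hg
    have := ha _ (hb g hg)
    simpa [mul_assoc] using this
  add_mem' := by
    intro a b ha hb g hg
    have h1 := ha g hg
    have h2 := hb g hg
    have e : (fun x => (a + b) x * g x) = fun x => a x * g x + b x * g x := by
      ext x; simp [add_mul]
    rw [e]
    refine ⟨h1.1.add h2.1, fun p => ?_⟩
    simp only [add_mul]
    have i1 : Integrable (fun x => a x * g x * p.eval x) σ :=
      h1.1.integrable_mul (memLp_growth hmom (poly_mem p))
    have i2 : Integrable (fun x => b x * g x * p.eval x) σ :=
      h2.1.integrable_mul (memLp_growth hmom (poly_mem p))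
    rw [integral_add i1 i2, h1.2 p, h2.2 p, add_zero]
  algebraMap_mem' := by
    intro r g hg
    have e : (fun x => (algebraMap ℝ (ℝ →ᵇ ℝ) r) x * g x) = fun x => r * g x := by
      ext x; simp
    rw [e]
    refine ⟨hg.1.const_mul r, fun p => ?_⟩
    simp only [mul_assoc]
    rw [integral_const_mul, hg.2 p, mul_zero]
  star_mem' := by
    intro a ha
    have : star a = a := by ext x; simp
    rw [this]; exact ha

theorem orth_eq_zero (σ : Measure ℝ)
    (hmom : ∀ k : ℕ, Integrable (fun u : ℝ => |u| ^ k) σ)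
    (hdet : ∀ μ : Measure ℝ,
      (∀ k : ℕ, Integrable (fun u : ℝ => |u| ^ k) μ) →
      (∀ k : ℕ, ∫ u, u ^ k ∂μ = ∫ u, u ^ k ∂σ) → μ = σ)
    {g : ℝ → ℝ} (hg : Orth σ g) : g =ᵐ[σ] 0 := by
  have hgi : Integrable g σ := by
    have h1 : Integrable (fun x => g x * (1 : Polynomial ℝ).eval x) σ :=
      hg.1.integrable_mul (memLp_growth hmom (poly_mem 1))
    simpa using h1
  let P : Measure ℝ := σ.withDensity fun x => ENNReal.ofReal (g x)
  let P' : Measure ℝ := σ.withDensity fun x => ENNReal.ofReal (-g x)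
  have : IsFiniteMeasure P := isFiniteMeasure_withDensity_ofReal hgi.2
  have : IsFiniteMeasure P' := isFiniteMeasure_withDensity_ofReal hgi.neg.2
  have hm1 : AEMeasurable (fun x => ENNReal.ofReal (g x)) σ := hgi.1.aemeasurable.ennreal_ofReal
  have hm2 : AEMeasurable (fun x => ENNReal.ofReal (-g x)) σ :=
    hgi.neg.1.aemeasurable.ennreal_ofReal
  have hPP : P = P' := by
    refine ext_of_forall_mem_subalgebra_integral_eq_of_polish (𝕜 := ℝ) (A := multAlg σ hmom) ?_ ?_
    · intro x y hxy
      by_contra hcon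
      push Not at hcon
      have h1 : hOne x = hOne y := hcon _ ⟨_, ⟨hOne, fun g hg =>
        orth_mul_one σ hmom hdet hg, rfl⟩, rfl⟩
      have h2 : hTwo x = hTwo y := hcon _ ⟨_, ⟨hTwo, fun g hg =>
        orth_mul_two σ hmom hdet hg, rfl⟩, rfl⟩
      change 1 / (1 + x ^ 2) = 1 / (1 + y ^ 2) at h1
      change x / (1 + x ^ 2) = y / (1 + y ^ 2) at h2
      rw [div_eq_mul_one_div x, div_eq_mul_one_div y, h1] at h2
      exact hxy (mul_right_cancel₀ (by positivity) h2)
    · intro h hh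
      have h0 := (hh g hg).2 1
      simp only [Polynomial.eval_one, mul_one] at h0
      rw [integral_withDensity_eq_integral_toReal_smul₀ hm1
          (Filter.Eventually.of_forall fun x => ENNReal.ofReal_lt_top),
        integral_withDensity_eq_integral_toReal_smul₀ hm2
          (Filter.Eventually.of_forall fun x => ENNReal.ofReal_lt_top)]
      have hb : ∀ {φ : ℝ → ℝ}, Integrable φ σ → Integrable (fun x => φ x * h x) σ := by
        intro φ hφ
        exact hφ.mul_bdd (c := ‖h‖) h.continuous.aestronglyMeasurable
          (Filter.Eventually.of_forall fun x => h.norm_coe_le_norm x)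
      have i1 := hb hgi.pos_part
      have i2 := hb hgi.neg_part
      simp only [ENNReal.toReal_ofReal', smul_eq_mul]
      rw [← sub_eq_zero, ← integral_sub i1 i2]
      refine Eq.trans ?_ h0
      congr 1; ext x
      rw [← sub_mul, mul_comm]
      congr 1
      exact posPart_sub_negPart (g x)
  have hae := (withDensity_eq_iff hm1 hm2 (by
    have := measure_ne_top P Set.univ
    rwa [withDensity_apply _ MeasurableSet.univ, Measure.restrict_univ] at this)).1 hPP
  filter_upwards [hae] with x hx
  change g x = 0
  rcases le_total (g x) 0 with h | h
  · rw [ENNReal.ofReal_of_nonpos h] at hx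
    have := ENNReal.ofReal_eq_zero.1 hx.symm
    linarith
  · rw [ENNReal.ofReal_of_nonpos (by linarith : -g x ≤ 0)] at hx
    exact le_antisymm (ENNReal.ofReal_eq_zero.1 hx) h

/-- If `σ` is a measure on `ℝ` with all moments finite which is the solution of a
determinate moment problem (any measure with the same moments equals `σ`), then the
polynomial functions are dense in `L²(σ)`. -/
theorem polynomials_dense_of_determinate (σ : Measure ℝ)
    (hmom : ∀ k : ℕ, Integrable (fun u : ℝ => |u| ^ k) σ)
    (hdet : ∀ μ : Measure ℝ,
      (∀ k : ℕ, Integrable (fun u : ℝ => |u| ^ k) μ) →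
      (∀ k : ℕ, ∫ u, u ^ k ∂μ = ∫ u, u ^ k ∂σ) → μ = σ) :
    Dense {f : Lp ℝ 2 σ | ∃ p : Polynomial ℝ, ∀ᵐ u ∂σ, f u = p.eval u} := by
  let K : Submodule ℝ (Lp ℝ 2 σ) :=
    { carrier := {f : Lp ℝ 2 σ | ∃ p : Polynomial ℝ, ∀ᵐ u ∂σ, f u = p.eval u}
      zero_mem' := ⟨0, by
        filter_upwards [Lp.coeFn_zero ℝ 2 σ] with u hu
        rw [hu]; simp⟩
      add_mem' := by
        rintro a b ⟨p, hp⟩ ⟨q, hq⟩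
        refine ⟨p + q, ?_⟩
        filter_upwards [Lp.coeFn_add a b, hp, hq] with u hu h1 h2
        rw [hu, Pi.add_apply, h1, h2, Polynomial.eval_add]
      smul_mem' := by
        rintro c a ⟨p, hp⟩
        refine ⟨Polynomial.C c * p, ?_⟩
        filter_upwards [Lp.coeFn_smul c a, hp] with u hu h1
        rw [hu, Pi.smul_apply, h1, Polynomial.eval_mul, Polynomial.eval_C, smul_eq_mul] }
  change Dense (K : Set (Lp ℝ 2 σ))
  rw [Submodule.dense_iff_topologicalClosure_eq_top, Submodule.topologicalClosure_eq_top_iff,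
    Submodule.eq_bot_iff]
  intro g hg
  have hO : Orth σ g := by
    refine ⟨Lp.memLp g, fun p => ?_⟩
    have hpL := memLp_growth hmom (poly_mem p)
    have h1 := (Submodule.mem_orthogonal K g).1 hg hpL.toLp ⟨p, hpL.coeFn_toLp⟩
    rw [L2.inner_def] at h1
    rw [← h1]
    refine integral_congr_ae ?_
    filter_upwards [hpL.coeFn_toLp] with u hu
    rw [hu]; simp
  exact (Lp.eq_zero_iff_ae_eq_zero).2 (orth_eq_zero σ hmom hdet hO)
end
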